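/- Let q be a prime power, a a positive integer, and use weights (1, 1, a) on 𝔽_q[x_0, x_1, x_2]. Set d_2 = (q−1)/gcd(q−1, a) and Y = {(1, t_1, t_2^a) : t_1, t_2 ∈ 𝔽_q^×} ⊆ 𝔽_q^3. If F ∈ 𝔽_q[x_0, x_1, x_2] is weighted homogeneous of degree α and there exists a point P ∈ Y with F(P) ≠ 0, then the number of points P ∈ Y with F(P) = 0 is at most d_2·α. -/

import Mathlib

open MvPolynomial

/-!
Setting `x₀ = 1` in `P` gives a polynomial `p(x₁, x₂)` each of whose monomials satisfies
`m₁ + a m₂ ≤ α`, and the points of `Y` become the points of the grid `A × B`, where `A = 𝔽ˣ` and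
`B` is its image under `t ↦ t ^ a`. Schwartz–Zippel on this grid bounds the number of zeros by
`max (m₁ |B| + m₂ |A|)` over the monomials of `p`. Since the fibres of `t ↦ t ^ a` have
`gcd(q - 1, a) ≤ a` elements, `|A| ≤ a |B|`, so the maximum is at most `α |B| = α d₂`.
-/

section WeightedSchwartzZippel

variable {R : Type*} [CommRing R] [IsDomain R] [DecidableEq R] {n : ℕ}

theorem weighted_schwartz_zippel {p : MvPolynomial (Fin n) R} (hp : p ≠ 0) {w : Fin n → ℕ}
    {S : Fin n → Finset R} {N : ℕ} (hN : ∀ i, N ≤ w i * (S i).card) :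
    N * {x ∈ Fintype.piFinset S | eval x p = 0}.card ≤
      weightedTotalDegree w p * ∏ i, (S i).card := by
  obtain rfl | hN0 := N.eq_zero_or_pos
  · simp
  have hS (i : Fin n) : 0 < (S i).card := Nat.pos_of_mul_pos_left (hN0.trans_le (hN i))
  have hinv (i : Fin n) : ((S i).card : ℚ≥0)⁻¹ ≤ w i / N := by
    rw [le_div_iff₀ (by exact_mod_cast hN0), inv_mul_le_iff₀ (by exact_mod_cast hS i), mul_comm]
    exact_mod_cast hN i
  have hsup : p.support.sup (fun m ↦ ∑ i, (m i / (S i).card : ℚ≥0)) ≤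
      ((weightedTotalDegree w p : ℕ) : ℚ≥0) / N := by
    refine Finset.sup_le fun m hm ↦ ?_
    calc ∑ i, (m i / (S i).card : ℚ≥0) ≤ ∑ i, (m i * (w i / N) : ℚ≥0) := by
          simp only [div_eq_mul_inv (Nat.cast (m _) : ℚ≥0)]
          gcongr with i
          exact hinv i
      _ = (Finsupp.weight w m : ℕ) / N := by
          simp [Finsupp.weight_apply, Finsupp.sum_fintype, Finset.sum_div, mul_div_assoc]
      _ ≤ (weightedTotalDegree w p : ℕ) / N := by
          gcongr
          exact le_weightedTotalDegree w hm
  have hcard := (schwartz_zippel_sup_sum hp S).trans hsup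
  rw [div_le_div_iff₀ (Finset.prod_pos fun i _ ↦ by exact_mod_cast hS i) (by positivity)] at hcard
  rw [mul_comm N]
  exact_mod_cast hcard

end WeightedSchwartzZippel

section Dehomogenize

variable {R : Type*} [CommSemiring R] {n : ℕ}

/-- Dehomogenization with respect to the first variable: the substitution `x₀ = 1`, with the
remaining variables renumbered from `0`. It turns the points `(1, t₁, t₂ ^ a)` into points of a
grid, where Schwartz–Zippel applies. It is defined on all polynomials, homogeneous or not. -/
noncomputable def dehomogenize : MvPolynomial (Fin (n + 1)) R →ₐ[R] MvPolynomial (Fin n) R :=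
  aeval (Fin.cons 1 X)

theorem eval_dehomogenize (x : Fin n → R) (P : MvPolynomial (Fin (n + 1)) R) :
    eval x (dehomogenize P) = eval (Fin.cons 1 x) P := by
  suffices (aeval x).comp dehomogenize = aeval (R := R) (Fin.cons 1 x : Fin (n + 1) → R) from
    DFunLike.congr_fun this P
  ext i
  cases i using Fin.cases <;> simp [dehomogenize]

theorem dehomogenize_ne_zero_of_eval_ne_zero {x : Fin n → R} {P : MvPolynomial (Fin (n + 1)) R}
    (h : eval (Fin.cons 1 x) P ≠ 0) : dehomogenize P ≠ 0 := fun h0 ↦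
  h (by rw [← eval_dehomogenize, h0, map_zero])

theorem dehomogenize_monomial (m : Fin (n + 1) →₀ ℕ) (c : R) :
    dehomogenize (monomial m c) = monomial m.tail c := by
  rw [dehomogenize, aeval_monomial, monomial_eq, Finsupp.prod_fintype _ _ (by simp),
    Finsupp.prod_fintype _ _ (by simp), Fin.prod_univ_succ]
  simp [Finsupp.tail_apply]

theorem exists_tail_eq_of_mem_support_dehomogenize {P : MvPolynomial (Fin (n + 1)) R}
    {m : Fin n →₀ ℕ} (hm : m ∈ (dehomogenize P).support) : ∃ k ∈ P.support, k.tail = m := by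
  classical
  rw [mem_support_iff, P.as_sum, map_sum, coeff_sum] at hm
  obtain ⟨k, hk, hkm⟩ := Finset.exists_ne_zero_of_sum_ne_zero hm
  rw [dehomogenize_monomial, coeff_monomial] at hkm
  exact ⟨k, hk, (ite_ne_right_iff.mp hkm).1⟩

theorem weight_tail_le {M : Type*} [AddCommMonoid M] [Preorder M] [CanonicallyOrderedAdd M]
    (w : Fin (n + 1) → M) (m : Fin (n + 1) →₀ ℕ) :
    Finsupp.weight (Fin.tail w) m.tail ≤ Finsupp.weight w m := by
  rw [Finsupp.weight_apply, Finsupp.weight_apply, Finsupp.sum_fintype _ _ (by simp),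
    Finsupp.sum_fintype _ _ (by simp), Fin.sum_univ_succ]
  exact le_add_self

theorem weightedTotalDegree_dehomogenize_le {M : Type*} [AddCommMonoid M] [SemilatticeSup M]
    [OrderBot M] [CanonicallyOrderedAdd M] (w : Fin (n + 1) → M)
    (P : MvPolynomial (Fin (n + 1)) R) :
    weightedTotalDegree (Fin.tail w) (dehomogenize P) ≤ weightedTotalDegree w P := by
  refine Finset.sup_le fun m hm ↦ ?_
  obtain ⟨k, hk, rfl⟩ := exists_tail_eq_of_mem_support_dehomogenize hm
  exact (weight_tail_le w k).trans (le_weightedTotalDegree w hk)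

end Dehomogenize

theorem mul_ncard_zeros_affine_grid_le {R : Type*} [CommRing R] [IsDomain R] {n : ℕ}
    {P : MvPolynomial (Fin (n + 1)) R} (hP : dehomogenize P ≠ 0) {w : Fin (n + 1) → ℕ}
    {S : Fin n → Finset R} {N : ℕ} (hN : ∀ i, N ≤ w i.succ * (S i).card)
    {Y : Set (Fin (n + 1) → R)} (hY : ∀ y ∈ Y, y 0 = 1 ∧ ∀ i, y i.succ ∈ S i) :
    N * {y ∈ Y | eval y P = 0}.ncard ≤ weightedTotalDegree w P * ∏ i, (S i).card := by
  classical
  let Z : Finset (Fin n → R) := {x ∈ Fintype.piFinset S | eval x (dehomogenize P) = 0}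
  have hZ : {y ∈ Y | eval y P = 0} ⊆
      (Z.image fun x ↦ (Fin.cons 1 x : Fin (n + 1) → R) : Finset (Fin (n + 1) → R)) := by
    rintro y ⟨hyY, hyP⟩
    obtain ⟨hy0, hyS⟩ := hY y hyY
    have hy : Fin.cons 1 (Fin.tail y) = y := hy0 ▸ Fin.cons_self_tail y
    refine Finset.mem_coe.mpr (Finset.mem_image.mpr ⟨Fin.tail y, ?_, hy⟩)
    simpa [Z, eval_dehomogenize, hy, hyP, Fin.tail] using hyS
  calc N * {y ∈ Y | eval y P = 0}.ncard ≤ N * Z.card := by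
        gcongr
        exact (Set.ncard_le_ncard hZ (Finset.finite_toSet _)).trans
          ((Set.ncard_coe_finset _).trans_le Finset.card_image_le)
    _ ≤ weightedTotalDegree (Fin.tail w) (dehomogenize P) * ∏ i, (S i).card :=
        weighted_schwartz_zippel hP hN
    _ ≤ weightedTotalDegree w P * ∏ i, (S i).card := by
        gcongr
        exact weightedTotalDegree_dehomogenize_le w P

theorem le_mul_div_gcd (k : ℕ) {a : ℕ} (ha : 0 < a) : k ≤ a * (k / k.gcd a) :=
  calc k = k.gcd a * (k / k.gcd a) := (Nat.mul_div_cancel' (k.gcd_dvd_left a)).symm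
    _ ≤ a * (k / k.gcd a) := Nat.mul_le_mul_right _ (Nat.gcd_le_right k ha)

/-- The finite set `{t ^ a | t ∈ H}` for a finite subgroup `H` of `Rˣ`, viewed inside `R`: the
range of one coordinate on `Y`. -/
noncomputable def unitPowers {R : Type*} [Monoid R] (H : Subgroup Rˣ) [Finite H] (a : ℕ) :
    Finset R :=
  ((H : Set Rˣ).toFinite.image fun t : Rˣ ↦ (t : R) ^ a).toFinset

theorem mem_unitPowers {R : Type*} [Monoid R] {H : Subgroup Rˣ} [Finite H] {a : ℕ} {x : R} :
    x ∈ unitPowers H a ↔ ∃ t ∈ H, (t : R) ^ a = x := by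
  simp [unitPowers]

theorem card_unitPowers {R : Type*} [CommRing R] [IsDomain R] (H : Subgroup Rˣ) [Finite H]
    (a : ℕ) : (unitPowers H a).card = Nat.card H / (Nat.card H).gcd a := by
  let val : H → R := fun t ↦ ((t : Rˣ) : R)
  have hval : Function.Injective val := Units.val_injective.comp Subtype.val_injective
  have hrange : (unitPowers H a : Set R) = val '' (powMonoidHom a : H →* H).range := by
    ext x
    constructor
    · intro hx
      obtain ⟨t, ht, rfl⟩ := mem_unitPowers.mp hx
      exact ⟨⟨t, ht⟩ ^ a, ⟨⟨t, ht⟩, rfl⟩, rfl⟩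
    · rintro ⟨_, ⟨t, rfl⟩, rfl⟩
      exact mem_unitPowers.mpr ⟨t, t.2, rfl⟩
  rw [← Set.ncard_coe_finset, hrange, Set.ncard_image_of_injective _ hval, ← Nat.card_coe_set_eq]
  exact IsCyclic.card_powMonoidHom_range H a

theorem stmt14_general {R : Type*} [CommRing R] [IsDomain R] (H : Subgroup Rˣ) [Finite H]
    {a : ℕ} (ha : 0 < a) {P : MvPolynomial (Fin 3) R} (hP : dehomogenize P ≠ 0) (w₀ : ℕ) :
    {y ∈ {y | ∃ t₁ ∈ H, ∃ t₂ ∈ H, y = ![1, (t₁ : R), (t₂ : R) ^ a]} | eval y P = 0}.ncard ≤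
      Nat.card H / (Nat.card H).gcd a * weightedTotalDegree ![w₀, 1, a] P := by
  let S : Fin 2 → Finset R := ![unitPowers H 1, unitPowers H a]
  have hS : ∀ i : Fin 2, Nat.card H ≤ ![w₀, 1, a] i.succ * (S i).card := by
    simpa [S, Fin.forall_fin_two, card_unitPowers] using le_mul_div_gcd (Nat.card H) ha
  refine Nat.le_of_mul_le_mul_left ?_ (Nat.card_pos (α := H))
  calc _ ≤ weightedTotalDegree ![w₀, 1, a] P * ∏ i, (S i).card := by
        refine mul_ncard_zeros_affine_grid_le hP hS ?_
        rintro _ ⟨t₁, ht₁, t₂, ht₂, rfl⟩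
        exact ⟨rfl, Fin.forall_fin_two.mpr
          ⟨mem_unitPowers.mpr ⟨t₁, ht₁, pow_one _⟩, mem_unitPowers.mpr ⟨t₂, ht₂, rfl⟩⟩⟩
    _ = Nat.card H * (Nat.card H / (Nat.card H).gcd a * weightedTotalDegree ![w₀, 1, a] P) := by
        simp only [S, Fin.prod_univ_two, Matrix.cons_val_zero, Matrix.cons_val_one,
          card_unitPowers, Nat.gcd_one_right, Nat.div_one]
        ring

/-- With `q` the cardinality of a finite field `𝔽`, a positive
integer `a`, weights `(1, 1, a)` on `𝔽[x₀, x₁, x₂]`, `d₂ = (q-1)/gcd(q-1, a)` and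
`Y = {(1, t₁, t₂^a) : t₁, t₂ ∈ 𝔽ˣ}`: if `P` is weighted homogeneous of degree `α`
and does not vanish identically on `Y`, then `P` vanishes at at most `d₂·α` points
of `Y`. -/
theorem stmt14 (F : Type) [Field F] [Fintype F] (q : ℕ) (hq : Fintype.card F = q)
    (a : ℕ) (ha : 0 < a)
    (d2 : ℕ) (hd2 : d2 = (q - 1) / Nat.gcd (q - 1) a)
    (Y : Set (Fin 3 → F))
    (hY : Y = {y | ∃ t1 t2 : Fˣ, y = ![1, (t1 : F), (t2 : F) ^ a]})
    (P : MvPolynomial (Fin 3) F) (α : ℕ)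
    (hP : IsWeightedHomogeneous ![1, 1, a] P α)
    (hne : ∃ p ∈ Y, eval p P ≠ 0) :
    {y ∈ Y | eval y P = 0}.ncard ≤ d2 * α := by
  have hcard : Nat.card Fˣ = q - 1 := by rw [Nat.card_units, Nat.card_eq_fintype_card, hq]
  have hdeg : weightedTotalDegree ![1, 1, a] P ≤ α :=
    Finset.sup_le fun m hm ↦ (hP (mem_support_iff.mp hm)).le
  subst hY hd2
  obtain ⟨_, ⟨t₁, t₂, rfl⟩, hP0⟩ := hne
  simpa [hcard] using (stmt14_general ⊤ ha (dehomogenize_ne_zero_of_eval_ne_zero hP0) 1).trans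
    (Nat.mul_le_mul_left _ hdeg)
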